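/- Irreducibility of the tensor product, case 0 ≤ κ ≤ n−2: let (ε₁,…,ε_n) = (1^κ,0^{n−κ}) with n ≥ 2 and 0 ≤ κ ≤ n−2, and l, m ∈ ℕ. Over the field ℂ(q)(x,y) with x, y independent indeterminates, the only subspaces of 𝒲_l⊗𝒲_m invariant under all the operators Δ(e_i), Δ(f_i), Δ(k_i^{±1}) (i ∈ ℤ/nℤ) are {0} and 𝒲_l⊗𝒲_m. -/

import Mathlib

/-!
The idea is to degenerate in the spectral parameter `y` until every generator acts by a partial
injection on the basis, after which irreducibility is a statement about particles on a ring.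

Let `w` be the `n`-th power of the degree valuation in `y`, so that `w y = exp n`, while `x` and the
constants have `w = 1`. Measure the coefficient of `|a⟩⊗|b⟩` in a vector by `w (coefficient)` times
`exp (∑ t * b_t)` (`gw`, sites `t` counted from `0`). This spreads the parameter `y` of `e_0` evenly
over the ring: for every `r`, the operator `1 ⊗ e_r` scales all sizes by `exp 1`, whereas
`e_r ⊗ k_r` leaves them unchanged; likewise `f_r ⊗ 1` leaves sizes unchanged, whereas
`k_r⁻¹ ⊗ f_r` scales them by `exp (-1)`. Let the leading support of a vector be the set of basis
labels at which its size is maximal (`Lead`). Then `Δ(e_r)` acts on leading supports by moving a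
particle `r - 1 → r` in `b`, and `Δ(f_r)` by moving a particle `r → r - 1` in `a`, discarding the
labels for which the move is impossible, as long as some label survives (`Lead.dE_step`,
`Lead.dF_step`). The coefficients `[m_i]` are nonzero as `q` is not a root of unity.

Start from any nonzero vector of an invariant subspace `U`. Choose in its leading support a `b` of
maximal total distance to the last site, which is bosonic, and move the particles of this `b` one
step at a time to the last site: every other label of the support either dies or has its `b`
collected there as well. Treating `a` in the same way by leftward moves makes the leading support a
singleton. Reversing such paths leads from there to every singleton (`singleton_of_stable`).
Vectors with distinct singleton leading supports are linearly independent
(`linearIndependent_of_lead`), so `U` has the full dimension.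
-/

open scoped BigOperators

set_option synthInstance.maxHeartbeats 1000000
set_option maxHeartbeats 1000000

noncomputable section

namespace TetraGQ

/-! ## Scalar ingredients -/

/-- `(a;qb)_m = ∏_{k=0}^{m-1} (1 - a qb^k)`. -/
def poch (qb a : ℂ) (m : ℕ) : ℂ := ∏ k ∈ Finset.range m, (1 - a * qb ^ k)

/-- The `q`-binomial `binom(m,k)_qb`, zero unless `k ≤ m`. -/
def qbinom (qb : ℂ) (m k : ℕ) : ℂ :=
  if k ≤ m then poch qb qb m / (poch qb qb k * poch qb qb (m - k)) else 0

/-- `[m] = (q^m - q^{-m})/(q - q^{-1})`. -/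
def qnum (q : ℂ) (m : ℕ) : ℂ := (q ^ m - q⁻¹ ^ m) / (q - q⁻¹)

/-- `[m]! = ∏_{k=1}^m [k]`. -/
def qfac (q : ℂ) (m : ℕ) : ℂ := ∏ k ∈ Finset.range m, qnum q (k + 1)

/-- The symmetric `q`-binomial `[m choose k]`, zero unless `k ≤ m`. -/
def qbin (q : ℂ) (m k : ℕ) : ℂ :=
  if k ≤ m then qfac q m / (qfac q k * qfac q (m - k)) else 0

/-- The 3D `R` matrix entry `R^{a,b,c}_{i,j,k}`. -/
def R3 (q : ℂ) (a b c i j k : ℕ) : ℂ :=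
  (if a + b = i + j ∧ b + c = j + k then (1 : ℂ) else 0) *
    ∑ lam ∈ Finset.range (b + 1),
      (-1 : ℂ) ^ lam *
        q ^ ((i : ℤ) * ((c : ℤ) - (j : ℤ)) + ((k : ℤ) + 1) * (lam : ℤ) +
            ((b : ℤ) - (lam : ℤ)) * ((b : ℤ) - (lam : ℤ) - (k : ℤ))) *
        (poch (q ^ 2) (q ^ 2) (c + (b - lam)) / poch (q ^ 2) (q ^ 2) c) *
        qbinom (q ^ 2) i (b - lam) * qbinom (q ^ 2) j lam

/-- The 3D `L` matrix entry `L^{a,b,c}_{i,j,k}`. -/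
def L3 (q : ℂ) (a b c i j k : ℕ) : ℂ :=
  if a = 0 ∧ b = 0 ∧ i = 0 ∧ j = 0 ∧ c = k then 1
  else if a = 1 ∧ b = 1 ∧ i = 1 ∧ j = 1 ∧ c = k then 1
  else if a = 0 ∧ b = 1 ∧ i = 0 ∧ j = 1 ∧ c = k then -q ^ (k + 1)
  else if a = 1 ∧ b = 0 ∧ i = 1 ∧ j = 0 ∧ c = k then q ^ k
  else if a = 0 ∧ b = 1 ∧ i = 1 ∧ j = 0 ∧ c + 1 = k then 1 - q ^ (2 * k)
  else if a = 1 ∧ b = 0 ∧ i = 0 ∧ j = 1 ∧ c = k + 1 then 1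
  else 0

/-- `S^(0) = R`, `S^(1) = L`. -/
def Sg (q : ℂ) (e : Bool) (a b c i j k : ℕ) : ℂ :=
  if e then L3 q a b c i j k else R3 q a b c i j k

/-- Coefficient of `z^{c0}` in the trace solution matrix element
`S₀(z)^{a,b}_{i,j}`. -/
def trCoef (q : ℂ) {n : ℕ} [NeZero n] (ε : Fin n → Bool) (a b i j : Fin n → ℕ)
    (c0 : ℕ) : ℂ :=
  ∑ᶠ c : Fin n → ℕ,
    if c 0 = c0 then
      ∏ t : Fin n, Sg q (ε t) (a t) (b t) (c t) (i t) (j t) (c (t + 1))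
    else 0

/-- Coefficient of `z^{c0}` in the boundary solution matrix element
`S₀^{1,1}(z)^{a,b}_{i,j}`. -/
def bdCoef (q : ℂ) {n : ℕ} (ε : Fin n → Bool) (a b i j : Fin n → ℕ) (c0 : ℕ) : ℂ :=
  ∑ᶠ c : Fin (n + 1) → ℕ,
    if c 0 = c0 then
      poch (q ^ 2) (q ^ 2) c0 / (poch q q c0 * poch q q (c (Fin.last n))) *
        ∏ t : Fin n, Sg q (ε t) (a t) (b t) (c t.castSucc) (i t) (j t) (c t.succ)
    else 0

/-- Coefficient of `z^{c0}` in the boundary solution matrix element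
`S₀^{s,t}(z)^{a,b}_{i,j}`. -/
def bdCoefST (q : ℂ) (s t : ℕ) {n : ℕ} (ε : Fin n → Bool) (a b i j : Fin n → ℕ)
    (c0 : ℕ) : ℂ :=
  ∑ᶠ c : Fin (n + 1) → ℕ,
    if c 0 = c0 then
      poch (q ^ 2) (q ^ 2) (s * c0) /
          (poch (q ^ s ^ 2) (q ^ s ^ 2) c0 * poch (q ^ t ^ 2) (q ^ t ^ 2) (c (Fin.last n))) *
        ∏ u : Fin n,
          Sg q (ε u) (a u) (b u)
            (if u.castSucc = 0 then s * c0 else c u.castSucc) (i u) (j u)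
            (if u.succ = Fin.last n then t * c (Fin.last n) else c u.succ)
    else 0

/-! ## The spaces `𝒲` and `𝒲⊗𝒲` -/

/-- `m` is an admissible occupation vector: at positions with `ε = 1` the entry is `≤ 1`. -/
def Ok {n : ℕ} (ε : Fin n → Bool) (m : Fin n → ℕ) : Prop := ∀ t, ε t = true → m t ≤ 1

instance {n : ℕ} (ε : Fin n → Bool) : DecidablePred (Ok ε) := fun m =>
  decidable_of_iff (∀ t, ε t = true → m t ≤ 1) Iff.rfl

/-- Basis labels of `𝒲`. -/
def Idx {n : ℕ} (ε : Fin n → Bool) : Type := {m : Fin n → ℕ // Ok ε m}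

/-- The space `𝒲` with basis `|m⟩`, over the field `L`. -/
abbrev W (L : Type) [Field L] {n : ℕ} (ε : Fin n → Bool) : Type := Idx ε →₀ L

/-- The space `𝒲 ⊗ 𝒲` with basis `|a⟩⊗|b⟩`, over the field `L`. -/
abbrev WW (L : Type) [Field L] {n : ℕ} (ε : Fin n → Bool) : Type := (Idx ε × Idx ε) →₀ L

/-- The ket `|m⟩ ∈ 𝒲`; it is `0` if any coordinate is out of range. -/
def ket (L : Type) [Field L] {n : ℕ} (ε : Fin n → Bool) (m : Fin n → ℤ) : W L ε :=
  if h : (∀ t, 0 ≤ m t) ∧ Ok ε (fun t => (m t).toNat) then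
    Finsupp.single ⟨fun t => (m t).toNat, h.2⟩ 1
  else 0

/-- The ket `|a⟩⊗|b⟩ ∈ 𝒲⊗𝒲`; it is `0` if any coordinate is out of range. -/
def kk (L : Type) [Field L] {n : ℕ} (ε : Fin n → Bool) (a b : Fin n → ℤ) : WW L ε :=
  if h : ((∀ t, 0 ≤ a t) ∧ Ok ε (fun t => (a t).toNat)) ∧
      ((∀ t, 0 ≤ b t) ∧ Ok ε (fun t => (b t).toNat)) then
    Finsupp.single (⟨fun t => (a t).toNat, h.1.2⟩, ⟨fun t => (b t).toNat, h.2.2⟩) 1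
  else 0

/-- The linear endomorphism of a free module determined by images of basis vectors. -/
def mkEnd (L : Type) [Field L] {α : Type} (v : α → (α →₀ L)) :
    (α →₀ L) →ₗ[L] (α →₀ L) :=
  Finsupp.lsum L fun m => LinearMap.toSpanSingleton L (α →₀ L) (v m)

/-- Product of vectors of `𝒲`, landing in `𝒲⊗𝒲`. -/
def tens (L : Type) [Field L] {n : ℕ} {ε : Fin n → Bool} (u v : W L ε) : WW L ε :=
  u.sum fun a ca => v.sum fun b cb => Finsupp.single (a, b) (ca * cb)

/-- The operator `A ⊗ B` on `𝒲⊗𝒲`. -/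
def opT (L : Type) [Field L] {n : ℕ} {ε : Fin n → Bool}
    (A B : W L ε →ₗ[L] W L ε) : WW L ε →ₗ[L] WW L ε :=
  mkEnd L fun mm => tens L (A (Finsupp.single mm.1 1)) (B (Finsupp.single mm.2 1))

/-- The subspace `𝒲_l ⊗ 𝒲_m` of `𝒲⊗𝒲`. -/
def WWlm (L : Type) [Field L] {n : ℕ} (ε : Fin n → Bool) (l m : ℕ) :
    Submodule L (WW L ε) :=
  Submodule.span L {v | ∃ p : Idx ε × Idx ε,
    (∑ t, p.1.1 t) = l ∧ (∑ t, p.2.1 t) = m ∧ v = Finsupp.single p 1}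

/-- The subspace `𝒲_l` of `𝒲`. -/
def Wl (L : Type) [Field L] {n : ℕ} (ε : Fin n → Bool) (l : ℕ) : Submodule L (W L ε) :=
  Submodule.span L {v | ∃ p : Idx ε, (∑ t, p.1 t) = l ∧ v = Finsupp.single p 1}

/-! ## The scalar field of formal Laurent series in `z` over `ℂ` -/

abbrev K : Type := LaurentSeries ℂ

/-- The power series `Σ_{c≥0} f(c) z^c` as an element of `K`. -/
def mkS (f : ℕ → ℂ) : K := HahnSeries.ofPowerSeries ℤ ℂ (PowerSeries.mk f)

/-- Constants `ℂ → K`. -/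
def cK : ℂ →+* K := HahnSeries.C

/-- The variable `z ∈ K`. -/
def zK : K := mkS fun c => if c = 1 then 1 else 0

/-! ## The solutions of the Yang-Baxter equation -/

/-- The unnormalized trace solution `S₀(z)` acting on `𝒲⊗𝒲`. -/
def S0tr (q : ℂ) {n : ℕ} [NeZero n] (ε : Fin n → Bool) : WW K ε →ₗ[K] WW K ε :=
  mkEnd K fun ij =>
    ∑ a ∈ Fintype.piFinset (fun t => Finset.range (ij.1.1 t + ij.2.1 t + 1)),
      mkS (trCoef q ε a (fun t => ij.1.1 t + ij.2.1 t - a t) ij.1.1 ij.2.1) •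
        kk K ε (fun t => (a t : ℤ)) (fun t => (ij.1.1 t : ℤ) + (ij.2.1 t : ℤ) - (a t : ℤ))

/-- The unnormalized boundary solution `S₀^{1,1}(z)` acting on `𝒲⊗𝒲`. -/
def S0bd (q : ℂ) {n : ℕ} (ε : Fin n → Bool) : WW K ε →ₗ[K] WW K ε :=
  mkEnd K fun ij =>
    ∑ a ∈ Fintype.piFinset (fun t => Finset.range (ij.1.1 t + ij.2.1 t + 1)),
      mkS (bdCoef q ε a (fun t => ij.1.1 t + ij.2.1 t - a t) ij.1.1 ij.2.1) •
        kk K ε (fun t => (a t : ℤ)) (fun t => (ij.1.1 t : ℤ) + (ij.2.1 t : ℤ) - (a t : ℤ))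

/-- The unnormalized boundary solution `S₀^{s,t}(z)` acting on `𝒲⊗𝒲`. -/
def S0bdST (q : ℂ) (s t : ℕ) {n : ℕ} (ε : Fin n → Bool) : WW K ε →ₗ[K] WW K ε :=
  mkEnd K fun ij =>
    ∑ a ∈ Fintype.piFinset (fun u => Finset.range (ij.1.1 u + ij.2.1 u + 1)),
      mkS (bdCoefST q s t ε a (fun u => ij.1.1 u + ij.2.1 u - a u) ij.1.1 ij.2.1) •
        kk K ε (fun u => (a u : ℤ)) (fun u => (ij.1.1 u : ℤ) + (ij.2.1 u : ℤ) - (a u : ℤ))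

/-- The diagonal gauge operator; `Kdiag pc ε s |m⟩ = pc^{s·(m₁+⋯+m_n)} |m⟩`
(`s = -1` gives `K`, `s = 1` gives `K⁻¹`). -/
def Kdiag (pc : ℂ) {n : ℕ} (ε : Fin n → Bool) (s : ℤ) : W K ε →ₗ[K] W K ε :=
  mkEnd K fun m => cK (pc ^ (s * ∑ t, (m.1 t : ℤ))) • Finsupp.single m 1

/-- The gauge transformed boundary solution `S̃₀^{1,1}(z) = (K⊗1) S₀^{1,1}(z) (1⊗K⁻¹)`. -/
def S0bdT (q pc : ℂ) {n : ℕ} (ε : Fin n → Bool) : WW K ε →ₗ[K] WW K ε :=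
  opT K (Kdiag pc ε (-1)) LinearMap.id ∘ₗ S0bd q ε ∘ₗ opT K LinearMap.id (Kdiag pc ε 1)

/-! ## The generalized quantum group actions -/

/-- Value of an occupation vector at a natural-number position. -/
def av {n : ℕ} (m : Fin n → ℕ) (p : ℕ) : ℕ := if h : p < n then m ⟨p, h⟩ else 0

/-- Unit coordinate vector at a natural-number position. -/
def dlt {n : ℕ} (p : ℕ) : Fin n → ℤ := fun t => if (t : ℕ) = p then 1 else 0

/-- `q_i = q` if `ε_i = 0` and `-q⁻¹` if `ε_i = 1` (0-based positions). -/
def qc (q : ℂ) {n : ℕ} (ε : Fin n → Bool) (p : ℕ) : ℂ :=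
  if h : p < n then (if ε ⟨p, h⟩ then -q⁻¹ else q) else q

/-- Type A generator `e_r` of the action `π_x`. -/
def eA (q : ℂ) {L : Type} [Field L] (ι : ℂ →+* L) {n : ℕ} (ε : Fin n → Bool) (x : L)
    (r : Fin n) : W L ε →ₗ[L] W L ε :=
  mkEnd L fun m =>
    (x ^ (if (r : ℕ) = 0 then 1 else 0) * ι (qnum q (av m.1 (((r : ℕ) + n - 1) % n)))) •
      ket L ε fun t => (m.1 t : ℤ) - dlt (((r : ℕ) + n - 1) % n) t + dlt (r : ℕ) t

/-- Type A generator `f_r` of the action `π_x`. -/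
def fA (q : ℂ) {L : Type} [Field L] (ι : ℂ →+* L) {n : ℕ} (ε : Fin n → Bool) (x : L)
    (r : Fin n) : W L ε →ₗ[L] W L ε :=
  mkEnd L fun m =>
    (x ^ (if (r : ℕ) = 0 then (-1 : ℤ) else 0) * ι (qnum q (av m.1 (r : ℕ)))) •
      ket L ε fun t => (m.1 t : ℤ) + dlt (((r : ℕ) + n - 1) % n) t - dlt (r : ℕ) t

/-- Type A generator `k_r^{s}` (`s = ±1`) of the action `π_x`. -/
def kA (q : ℂ) {L : Type} [Field L] (ι : ℂ →+* L) {n : ℕ} (ε : Fin n → Bool) (s : ℤ)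
    (r : Fin n) : W L ε →ₗ[L] W L ε :=
  mkEnd L fun m =>
    ι ((qc q ε (((r : ℕ) + n - 1) % n) ^ (-(av m.1 (((r : ℕ) + n - 1) % n) : ℤ)) *
        qc q ε (r : ℕ) ^ (av m.1 (r : ℕ) : ℤ)) ^ s) • Finsupp.single m 1

/-- Type B generator `e_r` of the action `π_x`. -/
def eB (q : ℂ) {L : Type} [Field L] (ι : ℂ →+* L) {n : ℕ} (ε : Fin n → Bool) (x : L)
    (r : Fin (n + 1)) : W L ε →ₗ[L] W L ε :=
  mkEnd L fun m =>
    if (r : ℕ) = 0 then x • ket L ε (fun t => (m.1 t : ℤ) + dlt 0 t)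
    else if (r : ℕ) = n then
      ι (qnum q (av m.1 (n - 1))) • ket L ε (fun t => (m.1 t : ℤ) - dlt (n - 1) t)
    else
      ι (qnum q (av m.1 ((r : ℕ) - 1))) •
        ket L ε (fun t => (m.1 t : ℤ) - dlt ((r : ℕ) - 1) t + dlt (r : ℕ) t)

/-- Type B generator `f_r` of the action `π_x`. -/
def fB (q : ℂ) {L : Type} [Field L] (ι : ℂ →+* L) {n : ℕ} (ε : Fin n → Bool) (x : L)
    (r : Fin (n + 1)) : W L ε →ₗ[L] W L ε :=
  mkEnd L fun m =>
    if (r : ℕ) = 0 then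
      (x⁻¹ * ι (qnum q (av m.1 0))) • ket L ε (fun t => (m.1 t : ℤ) - dlt 0 t)
    else if (r : ℕ) = n then ket L ε (fun t => (m.1 t : ℤ) + dlt (n - 1) t)
    else
      ι (qnum q (av m.1 (r : ℕ))) •
        ket L ε (fun t => (m.1 t : ℤ) + dlt ((r : ℕ) - 1) t - dlt (r : ℕ) t)

/-- Type B generator `k_r^{s}` (`s = ±1`) of the action `π_x`; `pc = i q^{-1/2}`. -/
def kB (q pc : ℂ) {L : Type} [Field L] (ι : ℂ →+* L) {n : ℕ} (ε : Fin n → Bool) (s : ℤ)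
    (r : Fin (n + 1)) : W L ε →ₗ[L] W L ε :=
  mkEnd L fun m =>
    ι ((if (r : ℕ) = 0 then pc⁻¹ * qc q ε 0 ^ (av m.1 0 : ℤ)
        else if (r : ℕ) = n then pc * qc q ε (n - 1) ^ (-(av m.1 (n - 1) : ℤ))
        else qc q ε ((r : ℕ) - 1) ^ (-(av m.1 ((r : ℕ) - 1) : ℤ)) *
          qc q ε (r : ℕ) ^ (av m.1 (r : ℕ) : ℤ)) ^ s) • Finsupp.single m 1

/-! ## Coproduct actions on `𝒲⊗𝒲` (type A) -/

/-- `Δ(e_r) = 1⊗e_r + e_r⊗k_r`, with `π_x` on the first factor, `π_y` on the second. -/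
def dE (q : ℂ) {L : Type} [Field L] (ι : ℂ →+* L) {n : ℕ} (ε : Fin n → Bool) (x y : L)
    (r : Fin n) : WW L ε →ₗ[L] WW L ε :=
  opT L LinearMap.id (eA q ι ε y r) + opT L (eA q ι ε x r) (kA q ι ε 1 r)

/-- `Δ'(e_r) = e_r⊗1 + k_r⊗e_r`. -/
def dE' (q : ℂ) {L : Type} [Field L] (ι : ℂ →+* L) {n : ℕ} (ε : Fin n → Bool) (x y : L)
    (r : Fin n) : WW L ε →ₗ[L] WW L ε :=
  opT L (eA q ι ε x r) LinearMap.id + opT L (kA q ι ε 1 r) (eA q ι ε y r)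

/-- `Δ(f_r) = f_r⊗1 + k_r⁻¹⊗f_r`. -/
def dF (q : ℂ) {L : Type} [Field L] (ι : ℂ →+* L) {n : ℕ} (ε : Fin n → Bool) (x y : L)
    (r : Fin n) : WW L ε →ₗ[L] WW L ε :=
  opT L (fA q ι ε x r) LinearMap.id + opT L (kA q ι ε (-1) r) (fA q ι ε y r)

/-- `Δ'(f_r) = 1⊗f_r + f_r⊗k_r⁻¹`. -/
def dF' (q : ℂ) {L : Type} [Field L] (ι : ℂ →+* L) {n : ℕ} (ε : Fin n → Bool) (x y : L)
    (r : Fin n) : WW L ε →ₗ[L] WW L ε :=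
  opT L LinearMap.id (fA q ι ε y r) + opT L (fA q ι ε x r) (kA q ι ε (-1) r)

/-- `Δ(k_r^s) = Δ'(k_r^s) = k_r^s ⊗ k_r^s`. -/
def dK (q : ℂ) {L : Type} [Field L] (ι : ℂ →+* L) {n : ℕ} (ε : Fin n → Bool) (s : ℤ)
    (r : Fin n) : WW L ε →ₗ[L] WW L ε :=
  opT L (kA q ι ε s r) (kA q ι ε s r)

/-! ## Coproduct actions on `𝒲⊗𝒲` (type B) -/

def dEB (q pc : ℂ) {L : Type} [Field L] (ι : ℂ →+* L) {n : ℕ} (ε : Fin n → Bool) (x y : L)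
    (r : Fin (n + 1)) : WW L ε →ₗ[L] WW L ε :=
  opT L LinearMap.id (eB q ι ε y r) + opT L (eB q ι ε x r) (kB q pc ι ε 1 r)

def dEB' (q pc : ℂ) {L : Type} [Field L] (ι : ℂ →+* L) {n : ℕ} (ε : Fin n → Bool) (x y : L)
    (r : Fin (n + 1)) : WW L ε →ₗ[L] WW L ε :=
  opT L (eB q ι ε x r) LinearMap.id + opT L (kB q pc ι ε 1 r) (eB q ι ε y r)

def dFB (q pc : ℂ) {L : Type} [Field L] (ι : ℂ →+* L) {n : ℕ} (ε : Fin n → Bool) (x y : L)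
    (r : Fin (n + 1)) : WW L ε →ₗ[L] WW L ε :=
  opT L (fB q ι ε x r) LinearMap.id + opT L (kB q pc ι ε (-1) r) (fB q ι ε y r)

def dFB' (q pc : ℂ) {L : Type} [Field L] (ι : ℂ →+* L) {n : ℕ} (ε : Fin n → Bool) (x y : L)
    (r : Fin (n + 1)) : WW L ε →ₗ[L] WW L ε :=
  opT L LinearMap.id (fB q ι ε y r) + opT L (fB q ι ε x r) (kB q pc ι ε (-1) r)

def dKB (q pc : ℂ) {L : Type} [Field L] (ι : ℂ →+* L) {n : ℕ} (ε : Fin n → Bool) (s : ℤ)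
    (r : Fin (n + 1)) : WW L ε →ₗ[L] WW L ε :=
  opT L (kB q pc ι ε s r) (kB q pc ι ε s r)

/-! ## Structure constants -/

/-- Type A structure constant `D_{i,j}` (as a product over 0-based positions). -/
def DA (q : ℂ) {n : ℕ} (ε : Fin n → Bool) (i j : Fin n) : ℂ :=
  ∏ p ∈ (({((i : ℕ) + n - 1) % n, (i : ℕ)} : Finset ℕ) ∩
      ({((j : ℕ) + n - 1) % n, (j : ℕ)} : Finset ℕ)),
    qc q ε p ^ (if i = j then (1 : ℤ) else -1)

/-- The set `⟨i⟩ = {i, i+1} ∩ [1,n]` of type B, translated to 0-based positions. -/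
def nodeB (n i : ℕ) : Finset ℕ :=
  if i = 0 then {0} else if i = n then {n - 1} else {i - 1, i}

/-- Type B structure constant `D_{i,j}`. -/
def DB (q : ℂ) {n : ℕ} (ε : Fin n → Bool) (i j : Fin (n + 1)) : ℂ :=
  ∏ p ∈ nodeB n (i : ℕ) ∩ nodeB n (j : ℕ), qc q ε p ^ (if i = j then (1 : ℤ) else -1)

/-! ## Distinguished vectors -/

/-- The vector `J_{n,j} = Σ_{i, Σi=j} q^{inv(i)} |i⟩⊗|1-i⟩`. -/
def Jfull (q : ℂ) {L : Type} [Field L] (ι : ℂ →+* L) {n : ℕ} (ε : Fin n → Bool)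
    (j : ℕ) : WW L ε :=
  ∑ i ∈ Fintype.piFinset (fun _ : Fin n => Finset.range 2),
    (if (∑ t, i t) = j then
        ι (q ^ (∑ s : Fin n, ∑ t : Fin n, if s < t then i s * (1 - i t) else 0))
      else 0) •
      kk L ε (fun t => (i t : ℤ)) (fun t => 1 - (i t : ℤ))

/-- Extension of a `Fin s`-tuple to `ℕ` by zero. -/
def ivf {s : ℕ} (i : Fin s → ℕ) : ℕ → ℕ := fun p => if h : p < s then i ⟨p, h⟩ else 0

/-- `inv(i₁,…,i_s) = Σ_{p<r} i_p (1 - i_r)`. -/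
def invv (s : ℕ) (iv : ℕ → ℕ) : ℕ :=
  ∑ p ∈ Finset.range s, ∑ r ∈ Finset.range s, if p < r then iv p * (1 - iv r) else 0

/-- Occupation vector `(0^{nn-s-t}, i₁,…,i_s, 1^t)`. -/
def winA (nn s t : ℕ) (iv : ℕ → ℕ) : Fin nn → ℤ := fun u =>
  if (u : ℕ) < nn - s - t then 0
  else if (u : ℕ) < nn - t then (iv ((u : ℕ) - (nn - s - t)) : ℤ)
  else 1

/-- The singular vector `ξ_t^{l,m}` for `κ = n`. -/
def xiA (q : ℂ) {L : Type} [Field L] (ι : ℂ →+* L) {n : ℕ} (ε : Fin n → Bool)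
    (l m t : ℕ) : WW L ε :=
  ∑ i ∈ Fintype.piFinset (fun _ : Fin (l + m - 2 * t) => Finset.range 2),
    (if (∑ u, i u) = l - t then ι (q ^ invv (l + m - 2 * t) (ivf i)) else 0) •
      kk L ε (winA n (l + m - 2 * t) t (ivf i))
        (winA n (l + m - 2 * t) t (fun p => 1 - ivf i p))

/-- Occupation vector `(0^{nn-s-1}, i₁,…,i_s, last)`. -/
def winA1 (nn s : ℕ) (iv : ℕ → ℕ) (last : ℤ) : Fin nn → ℤ := fun u =>
  if (u : ℕ) < nn - s - 1 then 0
  else if (u : ℕ) < nn - 1 then (iv ((u : ℕ) - (nn - s - 1)) : ℤ)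
  else last

/-- The singular vector `ξ_s^{l,m}` for `κ = n-1`. -/
def xiA1 (q : ℂ) {L : Type} [Field L] (ι : ℂ →+* L) {n : ℕ} (ε : Fin n → Bool)
    (l m s : ℕ) : WW L ε :=
  ∑ j ∈ Finset.range (s + 1),
    ∑ i ∈ Fintype.piFinset (fun _ : Fin s => Finset.range 2),
      (if (∑ u, i u) = s - j then
          ι ((-1 : ℂ) ^ j * q ^ (j * (m - s + 1)) * q ^ invv s (ivf i))
        else 0) •
        kk L ε (winA1 n s (ivf i) ((l : ℤ) + (j : ℤ) - (s : ℤ)))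
          (winA1 n s (fun p => 1 - ivf i p) ((m : ℤ) - (j : ℤ)))

/-- The singular vector `ξ_s^{l,m}` for `0 ≤ κ ≤ n-2`. -/
def xiA2 (q : ℂ) {L : Type} [Field L] (ι : ℂ →+* L) {n : ℕ} (ε : Fin n → Bool)
    (l m s : ℕ) : WW L ε :=
  ∑ j ∈ Finset.range (s + 1),
    ι ((-1 : ℂ) ^ j * q ^ ((j : ℤ) * (2 * (s : ℤ) - (m : ℤ) - (j : ℤ) - 1) + (m : ℤ) * (s : ℤ)) *
        qbin q s j) •
      kk L ε
        (fun u => if (u : ℕ) < n - 2 then 0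
          else if (u : ℕ) = n - 2 then (j : ℤ) else (l : ℤ) - (j : ℤ))
        (fun u => if (u : ℕ) < n - 2 then 0
          else if (u : ℕ) = n - 2 then (s : ℤ) - (j : ℤ) else (m : ℤ) - (s : ℤ) + (j : ℤ))

/-- The type B singular vector `ξ_l`. -/
def xiB (q pc : ℂ) {L : Type} [Field L] (ι : ℂ →+* L) {n : ℕ} (ε : Fin n → Bool)
    (l : ℕ) : WW L ε :=
  ∑ m ∈ Finset.range (l + 1),
    ι ((-pc) ^ (-(m : ℤ)) * q ^ ((m : ℤ) * (l : ℤ) - ((m * (m + 1) / 2 : ℕ) : ℤ)) *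
        qbin q l m) •
      kk L ε (fun u => if (u : ℕ) = n - 1 then (m : ℤ) else 0)
        (fun u => if (u : ℕ) = n - 1 then (l : ℤ) - (m : ℤ) else 0)

/-! ## Miscellany -/

/-- Apply a list of operators, the rightmost element of the list acting first. -/
def appList {L : Type} [Field L] {n : ℕ} {ε : Fin n → Bool}
    (ops : List (WW L ε →ₗ[L] WW L ε)) (v : WW L ε) : WW L ε :=
  ops.foldr (fun A w => A w) v

/-- A natural number as an element of `Fin n`. -/
def mfin {n : ℕ} [NeZero n] (p : ℕ) : Fin n :=
  ⟨p % n, Nat.mod_lt p (Nat.pos_of_ne_zero (NeZero.ne n))⟩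

/-- Reference weight-`l` occupation vector: `(0^{n-l},1^l)` if `κ = n`, `l·e_n` otherwise. -/
def refAN (n κ l : ℕ) : Fin n → ℕ := fun t =>
  if κ = n then (if n - l ≤ (t : ℕ) then 1 else 0) else (if (t : ℕ) = n - 1 then l else 0)

/-- The flip `P(u⊗v) = v⊗u` on `𝒲⊗𝒲`. -/
def Pop (L : Type) [Field L] {n : ℕ} (ε : Fin n → Bool) : WW L ε →ₗ[L] WW L ε :=
  mkEnd L fun p => Finsupp.single (p.2, p.1) 1

/-! ### Leading supports with respect to a weighted valuation -/

section Leading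

open WithZero

variable {L : Type} [Field L] {α : Type}

/-- The weighted size of the coefficient of `u` at `p` is `w (u p) * g p`. `Lead w g u S` says that
the positions at which this size is maximal, with a nonzero maximum, form exactly the set `S`. -/
def Lead (w : Valuation L (WithZero (Multiplicative ℤ))) (g : α → WithZero (Multiplicative ℤ))
    (u : α →₀ L) (S : Set α) : Prop :=
  ∃ M, M ≠ 0 ∧ ∀ p, w (u p) * g p ≤ M ∧ (w (u p) * g p = M ↔ p ∈ S)

variable {w : Valuation L (WithZero (Multiplicative ℤ))} {g : α → WithZero (Multiplicative ℤ)}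

lemma Lead.apply_ne_zero {u : α →₀ L} {S : Set α} (h : Lead w g u S) {p : α} (hp : p ∈ S) :
    u p ≠ 0 := by
  obtain ⟨M, hM, h⟩ := h
  intro h0
  have := (h p).2.2 hp
  rw [h0, map_zero, zero_mul] at this
  exact hM this.symm

lemma Lead.finite {u : α →₀ L} {S : Set α} (h : Lead w g u S) : S.Finite :=
  u.support.finite_toSet.subset fun _ hp => Finsupp.mem_support_iff.2 (h.apply_ne_zero hp)

lemma exists_lead (hg : ∀ p, 0 < g p) {u : α →₀ L} (hu : u ≠ 0) :
    ∃ S : Set α, Lead w g u S ∧ S.Nonempty := by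
  obtain ⟨p, hp, hmax⟩ := Finset.exists_max_image u.support (fun p => w (u p) * g p)
    (Finsupp.support_nonempty_iff.2 hu)
  refine ⟨{p' | w (u p') * g p' = w (u p) * g p}, ⟨w (u p) * g p, ?_, fun p' => ⟨?_, Iff.rfl⟩⟩,
    p, rfl⟩
  · exact mul_ne_zero ((Valuation.ne_zero_iff _).2 (Finsupp.mem_support_iff.1 hp)) (hg p).ne'
  · by_cases h : u p' = 0
    · simp [h]
    · exact hmax p' (Finsupp.mem_support_iff.2 h)

lemma apply_eq_sum (A : (α →₀ L) →ₗ[L] (α →₀ L)) (u : α →₀ L) (p' : α) :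
    A u p' = ∑ p ∈ u.support, u p * A (Finsupp.single p 1) p' := by
  conv_lhs => rw [← Finsupp.sum_single u, Finsupp.sum, map_sum, Finsupp.finsetSum_apply]
  refine Finset.sum_congr rfl fun p _ => ?_
  rw [← mul_one (u p), ← smul_eq_mul, ← Finsupp.smul_single, map_smul, Finsupp.smul_apply]
  simp

/-- If `A` acts on basis vectors by a partial injection `R`, scaling all sizes by the same factor
`c`, and `B` scales every size by strictly less than `c`, then `A + B` acts on leading supports
through `R`, provided that some leading term is not annihilated by `A`. -/
lemma Lead.step (hg : ∀ p, 0 < g p) {A B : (α →₀ L) →ₗ[L] (α →₀ L)} {R : α → α → Prop}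
    {c : WithZero (Multiplicative ℤ)} (hc : 0 < c)
    (hA : ∀ p p', R p p' → w (A (Finsupp.single p 1) p') * g p' = c * g p)
    (hA' : ∀ p p', ¬ R p p' → A (Finsupp.single p 1) p' = 0)
    (hB : ∀ p p', w (B (Finsupp.single p 1) p') * g p' < c * g p)
    (hR : ∀ p₁ p₂ p', R p₁ p' → R p₂ p' → p₁ = p₂)
    {u : α →₀ L} {S : Set α} (h : Lead w g u S) :
    Lead w g ((A + B) u) {p' | ∃ p ∈ S, R p p'} := by
  obtain ⟨M, hM, h⟩ := h
  have hcM : 0 < c * M := mul_pos hc (zero_lt_iff.2 hM)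
  refine ⟨c * M, hcM.ne', fun p' => ?_⟩
  have hBs : w (B u p') * g p' < c * M := by
    rw [← lt_div_iff₀ (hg p'), apply_eq_sum]
    refine Valuation.map_sum_lt' _ (div_pos hcM (hg p')) fun p hp => ?_
    rw [lt_div_iff₀ (hg p'), map_mul, mul_assoc]
    have hup : 0 < w (u p) :=
      zero_lt_iff.2 ((Valuation.ne_zero_iff _).2 (Finsupp.mem_support_iff.1 hp))
    calc w (u p) * (w (B (Finsupp.single p 1) p') * g p') < w (u p) * (c * g p) :=
          mul_lt_mul_of_pos_left (hB p p') hup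
      _ = c * (w (u p) * g p) := mul_left_comm _ _ _
      _ ≤ c * M := mul_le_mul_right (h p).1 _
  have hAs : w (A u p') * g p' ≤ c * M ∧
      (w (A u p') * g p' = c * M ↔ ∃ p ∈ S, R p p') := by
    by_cases hex : ∃ p, R p p'
    · obtain ⟨p, hp⟩ := hex
      have hAu : A u p' = u p * A (Finsupp.single p 1) p' := by
        rw [apply_eq_sum]
        refine Finset.sum_eq_single p (fun p₂ _ hne => ?_) (fun hnot => ?_)
        · rw [hA' p₂ p' fun h2 => hne (hR _ _ _ h2 hp), mul_zero]
        · rw [Finsupp.notMem_support_iff.1 hnot, zero_mul]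
      have hval : w (A u p') * g p' = c * (w (u p) * g p) := by
        rw [hAu, map_mul, mul_assoc, hA p p' hp, mul_left_comm]
      rw [hval]
      refine ⟨mul_le_mul_right (h p).1 _, ?_⟩
      rw [mul_right_inj' hc.ne', (h p).2]
      exact ⟨fun hS => ⟨p, hS, hp⟩, fun ⟨p₂, hS, h2⟩ => hR _ _ _ h2 hp ▸ hS⟩
    · have hAu : A u p' = 0 := by
        rw [apply_eq_sum]
        refine Finset.sum_eq_zero fun p _ => ?_
        rw [hA' p p' fun h2 => hex ⟨p, h2⟩, mul_zero]
      rw [hAu, map_zero, zero_mul]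
      exact ⟨zero_le, fun h0 => absurd h0.symm (ne_of_lt hcM).symm,
        fun ⟨p, _, h2⟩ => absurd ⟨p, h2⟩ hex⟩
  rw [LinearMap.add_apply, Finsupp.add_apply, Set.mem_ofPred_eq, ← hAs.2]
  rcases hAs.1.lt_or_eq with hlt | heq
  · have hlt' : w (A u p' + B u p') * g p' < c * M := by
      rw [← lt_div_iff₀ (hg p')] at hlt hBs ⊢
      exact Valuation.map_add_lt _ hlt hBs
    exact ⟨hlt'.le, fun h => absurd h hlt'.ne, fun h => absurd h hlt.ne⟩
  · have : w (A u p' + B u p') = w (A u p') := by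
      apply Valuation.map_add_eq_of_lt_left
      exact lt_of_mul_lt_mul_right (heq ▸ hBs) (hg p').le
    rw [this]
    exact ⟨hAs.1, Iff.rfl⟩

/-- A family of vectors whose leading supports are the distinct singletons `{f i}` is linearly
independent: in a vanishing combination, the largest of the sizes at the `f i` is not
cancelled. -/
lemma linearIndependent_of_lead (hg : ∀ p, 0 < g p) {F : Type} [Fintype F] (f : F → α)
    (hf : Function.Injective f) (u : F → (α →₀ L)) (hu : ∀ i, Lead w g (u i) {f i}) :
    LinearIndependent L u := by
  classical
  rw [Fintype.linearIndependent_iff]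
  intro c hsum
  by_contra! hne
  obtain ⟨i₀, hi₀⟩ := hne
  choose M hM h using hu
  obtain ⟨i, -, hmax⟩ := Finset.exists_max_image Finset.univ (fun i => w (c i) * M i) ⟨i₀, by simp⟩
  have hpos : 0 < w (c i) * M i :=
    lt_of_lt_of_le (mul_pos (zero_lt_iff.2 ((Valuation.ne_zero_iff _).2 hi₀))
      (zero_lt_iff.2 (hM i₀))) (hmax i₀ (by simp))
  have heval := DFunLike.congr_fun hsum (f i)
  rw [Finsupp.finsetSum_apply, ← Finset.add_sum_erase _ _ (Finset.mem_univ i), Finsupp.zero_apply,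
    Finsupp.smul_apply, smul_eq_mul] at heval
  have hrest : w (∑ j ∈ Finset.univ.erase i, (c j • u j) (f i)) * g (f i) < w (c i) * M i := by
    rw [← lt_div_iff₀ (hg _)]
    refine Valuation.map_sum_lt' _ (div_pos hpos (hg _)) fun j hj => ?_
    rw [lt_div_iff₀ (hg _), Finsupp.smul_apply, smul_eq_mul, map_mul, mul_assoc]
    by_cases hcj : c j = 0
    · simpa [hcj] using hpos
    have hlt : w (u j (f i)) * g (f i) < M j := by
      refine lt_of_le_of_ne (h j (f i)).1 fun heq => (Finset.mem_erase.1 hj).1 ?_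
      exact (hf ((h j (f i)).2.1 heq)).symm
    exact lt_of_lt_of_le (mul_lt_mul_of_pos_left hlt
      (zero_lt_iff.2 ((Valuation.ne_zero_iff _).2 hcj))) (hmax j (by simp))
  rw [← (neg_eq_of_add_eq_zero_right heval), Valuation.map_neg, map_mul, mul_assoc,
    (h i (f i)).2.2 rfl] at hrest
  exact lt_irrefl _ hrest

end Leading

/-! ### Moves of particles on the ring of sites -/

section Moves

variable {n : ℕ} {ε : Fin n → Bool}

/-- Linear statistic `∑ c_t b_t` of an occupation vector. -/
def pot (c : Fin n → ℕ) (b : Idx ε) : ℕ := ∑ t, c t * b.1 t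

/-- Number of rightward steps from site `t` to the last site. -/
def dR (t : Fin n) : ℕ := n - 1 - t

/-- Number of leftward cyclic steps from site `t` to the last site. -/
def dL (t : Fin n) : ℕ := if (t : ℕ) = n - 1 then 0 else t + 1

lemma eq_last_of_dR {t : Fin n} (h : dR t = 0) : (t : ℕ) = n - 1 := by
  have := t.2
  simp only [dR] at h; omega

lemma eq_last_of_dL {t : Fin n} (h : dL t = 0) : (t : ℕ) = n - 1 := by
  by_contra h'; simp [dL, h'] at h

lemma dR_eq_zero_iff (b : Idx ε) : pot dR b = 0 ↔ pot dL b = 0 := by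
  have : ∀ t : Fin n, dR t = 0 ↔ dL t = 0 := fun t =>
    ⟨fun h => by simp [dL, eq_last_of_dR h], fun h => by simp [dR, eq_last_of_dL h]⟩
  simp only [pot, Finset.sum_eq_zero_iff, mul_eq_zero, this]

variable [NeZero n]

/-- The cyclic predecessor of a site. -/
def cpred (r : Fin n) : Fin n :=
  ⟨((r : ℕ) + n - 1) % n, Nat.mod_lt _ (Nat.pos_of_ne_zero (NeZero.ne n))⟩

/-- `b'` arises from `b` by moving one particle from site `r - 1` to site `r`. -/
def Mv (r : Fin n) (b b' : Idx ε) : Prop :=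
  ∀ t, (b'.1 t : ℤ) = b.1 t - dlt (cpred r : ℕ) t + dlt (r : ℕ) t

instance (r : Fin n) (b b' : Idx ε) : Decidable (Mv r b b') := Classical.propDecidable _

lemma Mv.pot_eq {r : Fin n} {b b' : Idx ε} (h : Mv r b b') (c : Fin n → ℕ) :
    pot c b' + c (cpred r) = pot c b + c r := by
  have hd : ∀ s : Fin n, ∑ t, (c t : ℤ) * dlt (s : ℕ) t = c s := by
    intro s
    simp [dlt, ← Fin.ext_iff]
  zify
  simp only [pot, Nat.cast_sum, Nat.cast_mul]
  rw [← hd r, ← hd (cpred r), ← Finset.sum_add_distrib, ← Finset.sum_add_distrib]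
  refine Finset.sum_congr rfl fun t _ => ?_
  rw [h t]; ring

lemma Mv.right_unique {r : Fin n} {b b₁ b₂ : Idx ε} (h₁ : Mv r b b₁) (h₂ : Mv r b b₂) :
    b₁ = b₂ := by
  refine Subtype.ext (funext fun t => ?_)
  have := h₁ t; have := h₂ t; omega

lemma Mv.left_unique {r : Fin n} {b₁ b₂ b : Idx ε} (h₁ : Mv r b₁ b) (h₂ : Mv r b₂ b) :
    b₁ = b₂ := by
  refine Subtype.ext (funext fun t => ?_)
  have := h₁ t; have := h₂ t; omega

lemma cpred_val_of_ne {r : Fin n} (hr : (r : ℕ) ≠ 0) : (cpred r : ℕ) = r - 1 := by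
  have := r.2
  simp only [cpred]
  rw [show (r : ℕ) + n - 1 = (r - 1) + n by omega, Nat.add_mod_right, Nat.mod_eq_of_lt (by omega)]

lemma cpred_val_of_eq {r : Fin n} (hr : (r : ℕ) = 0) : (cpred r : ℕ) = n - 1 := by
  have := r.2
  simp only [cpred]
  rw [hr, Nat.mod_eq_of_lt (by omega)]; omega

lemma cpred_ne (hn : 2 ≤ n) (r : Fin n) : cpred r ≠ r := by
  intro h
  have h' := congrArg Fin.val h
  have := r.2
  by_cases hr : (r : ℕ) = 0
  · rw [cpred_val_of_eq hr] at h'; omega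
  · rw [cpred_val_of_ne hr] at h'; omega

lemma Mv.left_pos (hn : 2 ≤ n) {r : Fin n} {b b' : Idx ε} (h : Mv r b b') :
    b.1 (cpred r) ≠ 0 := by
  have h1 := h (cpred r)
  have h2 : (cpred r : ℕ) ≠ r := fun h => cpred_ne hn r (Fin.ext h)
  simp only [dlt, if_true, if_neg h2] at h1
  omega

lemma Mv.right_pos (hn : 2 ≤ n) {r : Fin n} {b b' : Idx ε} (h : Mv r b b') :
    b'.1 r ≠ 0 := by
  have h1 := h r
  have h2 : (r : ℕ) ≠ cpred r := fun h => cpred_ne hn r (Fin.ext h.symm)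
  simp only [dlt, if_true, if_neg h2] at h1
  omega

/-- A particle can move from `r - 1` to `r` unless `r` is an occupied site with `ε = 1`. -/
lemma exists_mv (hn : 2 ≤ n) (r : Fin n) (b : Idx ε) (h1 : b.1 (cpred r) ≠ 0)
    (h2 : ε r = true → b.1 r = 0) : ∃ b', Mv r b b' := by
  have hne := cpred_ne hn r
  refine ⟨⟨fun t => if t = cpred r then b.1 t - 1 else if t = r then b.1 t + 1 else b.1 t, ?_⟩, ?_⟩
  · intro t ht
    have := b.2 t ht
    dsimp only
    split_ifs with h3 h4
    · omega
    · subst h4; rw [h2 ht]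
    · exact this
  · intro t
    simp only [dlt, ← Fin.ext_iff]
    split_ifs with h3 h4 h4
    · exact absurd (h3.symm.trans h4) hne
    · subst h3; omega
    · push_cast; ring
    · ring

/-- A particle can move back from `r` to `r - 1` unless `r - 1` is an occupied site with
`ε = 1`. -/
lemma exists_mv_left (hn : 2 ≤ n) (r : Fin n) (b : Idx ε) (h1 : b.1 r ≠ 0)
    (h2 : ε (cpred r) = true → b.1 (cpred r) = 0) : ∃ b', Mv r b' b := by
  have hne := cpred_ne hn r
  refine ⟨⟨fun t => if t = cpred r then b.1 t + 1 else if t = r then b.1 t - 1 else b.1 t, ?_⟩, ?_⟩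
  · intro t ht
    have := b.2 t ht
    dsimp only
    split_ifs with h3 h4
    · subst h3; rw [h2 ht]
    · omega
    · exact this
  · intro t
    simp only [dlt, ← Fin.ext_iff]
    split_ifs with h3 h4 h4
    · exact absurd (h3.symm.trans h4) hne
    · push_cast; ring
    · subst h4; omega
    · ring

/-- Any `b` not concentrated on the last site admits a rightward move towards it: the rightmost
particle outside the last site is not blocked. -/
lemma exists_mv_dR (hn : 2 ≤ n) (hlast : ∀ t : Fin n, (t : ℕ) = n - 1 → ε t = false)
    (b : Idx ε) (hb : pot dR b ≠ 0) : ∃ r : Fin n, (r : ℕ) ≠ 0 ∧ ∃ b', Mv r b b' := by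
  classical
  obtain ⟨t, -, ht⟩ := Finset.exists_ne_zero_of_sum_ne_zero hb
  have htd := left_ne_zero_of_mul ht
  have htb := right_ne_zero_of_mul ht
  obtain ⟨i, hi, hmax⟩ := Finset.exists_max_image
    (Finset.univ.filter fun t : Fin n => dR t ≠ 0 ∧ b.1 t ≠ 0) (fun t => (t : ℕ))
    ⟨t, by simp [htd, htb]⟩
  simp only [Finset.mem_filter, Finset.mem_univ, true_and] at hi hmax
  have hi1 : (i : ℕ) + 1 < n := by have := hi.1; simp only [dR] at this; omega
  let r : Fin n := ⟨i + 1, hi1⟩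
  have hr : cpred r = i := Fin.ext (by rw [cpred_val_of_ne (by simp [r])]; simp [r])
  refine ⟨r, by simp [r], exists_mv hn r b (hr ▸ hi.2) fun hε => ?_⟩
  by_contra hbr
  have hrd : dR r ≠ 0 := by
    intro h0
    have : (r : ℕ) = n - 1 := by simp only [dR, r] at h0 ⊢; omega
    rw [hlast r this] at hε
    exact absurd hε (by simp)
  have := hmax r ⟨hrd, hbr⟩
  simp only [r] at this
  omega

/-- Any `b` not concentrated on the last site admits a leftward move towards it: the leftmost
particle outside the last site is not blocked. -/
lemma exists_mv_dL (hn : 2 ≤ n) (hlast : ∀ t : Fin n, (t : ℕ) = n - 1 → ε t = false)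
    (b : Idx ε) (hb : pot dL b ≠ 0) : ∃ r : Fin n, (r : ℕ) ≠ n - 1 ∧ ∃ b', Mv r b' b := by
  classical
  obtain ⟨t, -, ht⟩ := Finset.exists_ne_zero_of_sum_ne_zero hb
  have htd := left_ne_zero_of_mul ht
  have htb := right_ne_zero_of_mul ht
  obtain ⟨i, hi, hmin⟩ := Finset.exists_min_image
    (Finset.univ.filter fun t : Fin n => dL t ≠ 0 ∧ b.1 t ≠ 0) (fun t => (t : ℕ))
    ⟨t, by simp [htd, htb]⟩
  simp only [Finset.mem_filter, Finset.mem_univ, true_and] at hi hmin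
  have hi1 : (i : ℕ) ≠ n - 1 := by
    have := hi.1; simp only [dL] at this; intro h; simp [h] at this
  refine ⟨i, hi1, exists_mv_left hn i b hi.2 fun hε => ?_⟩
  by_contra hbr
  have hpl : (cpred i : ℕ) ≠ n - 1 := by
    intro h0
    rw [hlast _ h0] at hε
    exact absurd hε (by simp)
  have hi0 : (i : ℕ) ≠ 0 := fun h0 => hpl (cpred_val_of_eq h0)
  have := hmin (cpred i) ⟨by simp [dL, hpl], hbr⟩
  rw [cpred_val_of_ne hi0] at this
  omega

lemma Mv.dR_eq {r : Fin n} {b b' : Idx ε} (h : Mv r b b') (hr : (r : ℕ) ≠ 0) :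
    pot dR b' + 1 = pot dR b := by
  have h1 := h.pot_eq dR
  have h2 := cpred_val_of_ne hr
  have := r.2
  have h3 : dR (cpred r) = dR r + 1 := by simp only [dR, h2]; omega
  omega

lemma Mv.dL_eq {r : Fin n} {b b' : Idx ε} (h : Mv r b b') (hr : (r : ℕ) ≠ n - 1) :
    pot dL b + 1 = pot dL b' := by
  have h1 := h.pot_eq dL
  have := r.2
  have h3 : dL r = dL (cpred r) + 1 := by
    by_cases h0 : (r : ℕ) = 0
    · simp only [dL, cpred_val_of_eq h0, if_true]
      rw [if_neg hr]; omega
    · simp only [dL, cpred_val_of_ne h0, if_neg hr]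
      rw [if_neg (by omega)]; omega
  omega

/-- If `c` vanishes at most at the last site, then `pot c b = 0` forces `b` to be concentrated
there, so `b` is determined by its total. -/
lemma eq_of_pot_eq_zero {c : Fin n → ℕ} (hc : ∀ t : Fin n, c t = 0 → (t : ℕ) = n - 1)
    {b b' : Idx ε} (hb : pot c b = 0) (hb' : pot c b' = 0) (hs : ∑ t, b.1 t = ∑ t, b'.1 t) :
    b = b' := by
  have key : ∀ a : Idx ε, pot c a = 0 → ∀ t : Fin n, (t : ℕ) ≠ n - 1 → a.1 t = 0 := by
    intro a ha t ht
    have := Finset.sum_eq_zero_iff.1 ha t (Finset.mem_univ t)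
    exact (mul_eq_zero.1 this).resolve_left fun h => ht (hc t h)
  let z : Fin n := ⟨n - 1, Nat.sub_lt (Nat.pos_of_ne_zero (NeZero.ne n)) one_pos⟩
  have hz : ∀ a : Idx ε, pot c a = 0 → ∑ t, a.1 t = a.1 z := fun a ha =>
    Finset.sum_eq_single z (fun t _ ht => key a ha t fun h => ht (Fin.ext h)) (by simp)
  refine Subtype.ext (funext fun t => ?_)
  by_cases ht : (t : ℕ) = n - 1
  · have : t = z := Fin.ext ht
    rw [this, ← hz b hb, ← hz b' hb', hs]
  · rw [key b hb t ht, key b' hb' t ht]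

/-- Let `Q` be a family of finite sets of pairs with totals `(l, m)`, stable under the moves
`b ↦ b'` on second components and the reverse moves on first components. If `Q` has a nonempty
member, it contains every singleton with those totals. -/
lemma singleton_of_stable (hn : 2 ≤ n) (hlast : ∀ t : Fin n, (t : ℕ) = n - 1 → ε t = false)
    (l m : ℕ) (Q : Set (Idx ε × Idx ε) → Prop) (hfin : ∀ S, Q S → S.Finite)
    (htot : ∀ S, Q S → ∀ p ∈ S, ∑ t, p.1.1 t = l ∧ ∑ t, p.2.1 t = m)
    (hE : ∀ S r, Q S → Q {p' | ∃ p ∈ S, p.1 = p'.1 ∧ Mv r p.2 p'.2})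
    (hF : ∀ S r, Q S → Q {p' | ∃ p ∈ S, Mv r p'.1 p.1 ∧ p.2 = p'.2})
    {S₀ : Set (Idx ε × Idx ε)} (hQ₀ : Q S₀) (hne₀ : S₀.Nonempty)
    (p : Idx ε × Idx ε) (hp : ∑ t, p.1.1 t = l ∧ ∑ t, p.2.1 t = m) : Q {p} := by
  -- Following a second component farthest from the last site annihilates or collects all others.
  have phase1 : ∀ k S, Q S → (∀ p ∈ S, pot dR p.2 ≤ k) → (∃ p ∈ S, pot dR p.2 = k) →
      ∃ S', Q S' ∧ S'.Nonempty ∧ ∀ p ∈ S', pot dR p.2 = 0 := by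
    intro k
    induction k with
    | zero =>
      rintro S hQ hle ⟨p, hp, -⟩
      exact ⟨S, hQ, ⟨p, hp⟩, fun p hp => Nat.le_zero.1 (hle p hp)⟩
    | succ k ih =>
      rintro S hQ hle ⟨p, hp, hpk⟩
      obtain ⟨r, hr, b', hb'⟩ := exists_mv_dR hn hlast p.2 (by omega)
      refine ih _ (hE S r hQ) ?_ ⟨(p.1, b'), ⟨p, hp, rfl, hb'⟩, ?_⟩
      · rintro p' ⟨p₁, hp₁, -, hmv⟩
        have := hle p₁ hp₁
        have := hmv.dR_eq hr
        omega
      · have := hb'.dR_eq hr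
        simp only
        omega
  have phase2 : ∀ k S, Q S → (∀ p ∈ S, pot dR p.2 = 0) → (∀ p ∈ S, pot dL p.1 ≤ k) →
      (∃ p ∈ S, pot dL p.1 = k) →
      ∃ S', Q S' ∧ S'.Nonempty ∧ ∀ p ∈ S', pot dL p.1 = 0 ∧ pot dR p.2 = 0 := by
    intro k
    induction k with
    | zero =>
      rintro S hQ h0 hle ⟨p, hp, -⟩
      exact ⟨S, hQ, ⟨p, hp⟩, fun p hp => ⟨Nat.le_zero.1 (hle p hp), h0 p hp⟩⟩
    | succ k ih =>
      rintro S hQ h0 hle ⟨p, hp, hpk⟩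
      obtain ⟨r, hr, b', hb'⟩ := exists_mv_dL hn hlast p.1 (by omega)
      refine ih _ (hF S r hQ) ?_ ?_ ⟨(b', p.2), ⟨p, hp, hb', rfl⟩, ?_⟩
      · rintro p' ⟨p₁, hp₁, -, heq⟩
        rw [← heq]; exact h0 p₁ hp₁
      · rintro p' ⟨p₁, hp₁, hmv, -⟩
        have := hle p₁ hp₁
        have := hmv.dL_eq hr
        omega
      · have := hb'.dL_eq hr
        simp only
        omega
  obtain ⟨p₁, hp₁, hmax₁⟩ := Set.exists_max_image S₀ (fun p => pot dR p.2) (hfin _ hQ₀) hne₀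
  obtain ⟨S₁, hQ₁, hne₁, h₁⟩ := phase1 _ S₀ hQ₀ hmax₁ ⟨p₁, hp₁, rfl⟩
  obtain ⟨p₂, hp₂, hmax₂⟩ := Set.exists_max_image S₁ (fun p => pot dL p.1) (hfin _ hQ₁) hne₁
  obtain ⟨S₂, hQ₂, ⟨z, hz⟩, h₂⟩ := phase2 _ S₁ hQ₁ h₁ hmax₂ ⟨p₂, hp₂, rfl⟩
  have hS₂ : S₂ = {z} := by
    refine Set.eq_singleton_iff_unique_mem.2 ⟨hz, fun p' hp' => Prod.ext ?_ ?_⟩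
    · exact eq_of_pot_eq_zero (fun t => eq_last_of_dL) (h₂ p' hp').1 (h₂ z hz).1
        ((htot _ hQ₂ p' hp').1.trans (htot _ hQ₂ z hz).1.symm)
    · exact eq_of_pot_eq_zero (fun t => eq_last_of_dR) (h₂ p' hp').2 (h₂ z hz).2
        ((htot _ hQ₂ p' hp').2.trans (htot _ hQ₂ z hz).2.symm)
  have hzt := htot _ hQ₂ z hz
  have hz0 := h₂ z hz
  rw [hS₂] at hQ₂
  have hone : ∀ c b : Idx ε, ∀ r, Mv r c b → ∑ t, c.1 t = ∑ t, b.1 t := by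
    intro c b r h
    have := h.pot_eq (fun _ => 1)
    simp only [pot, one_mul] at this
    omega
  -- A leftward path from `b` to the last site, reversed, is a rightward path to `b`.
  have phase3 : ∀ k, ∀ b : Idx ε, ∑ t, b.1 t = m → pot dL b = k → Q {(z.1, b)} := by
    intro k
    induction k with
    | zero =>
      intro b hb h0
      have : b = z.2 := eq_of_pot_eq_zero (fun t => eq_last_of_dR)
        ((dR_eq_zero_iff b).2 h0) hz0.2 (hb.trans hzt.2.symm)
      rw [this]; exact hQ₂
    | succ k ih =>
      intro b hb hk
      obtain ⟨r, hr, c, hc⟩ := exists_mv_dL hn hlast b (by omega)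
      have := hc.dL_eq hr
      have h := hE _ r (ih c ((hone _ _ _ hc).trans hb) (by omega))
      convert h using 1
      ext p'
      simp only [Set.mem_singleton_iff, Set.mem_ofPred_eq, exists_eq_left]
      refine ⟨?_, fun ⟨h1, h2⟩ => Prod.ext h1.symm (h2.right_unique hc)⟩
      rintro rfl
      exact ⟨rfl, hc⟩
  have phase4 : ∀ k, ∀ a : Idx ε, ∑ t, a.1 t = l → pot dR a = k → Q {(a, p.2)} := by
    intro k
    induction k with
    | zero =>
      intro a ha h0
      have : a = z.1 := eq_of_pot_eq_zero (fun t => eq_last_of_dL)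
        ((dR_eq_zero_iff a).1 h0) hz0.1 (ha.trans hzt.1.symm)
      rw [this]; exact phase3 _ p.2 hp.2 rfl
    | succ k ih =>
      intro a ha hk
      obtain ⟨r, hr, c, hc⟩ := exists_mv_dR hn hlast a (by omega)
      have := hc.dR_eq hr
      have h := hF _ r (ih c ((hone _ _ _ hc).symm.trans ha) (by omega))
      convert h using 1
      ext p'
      simp only [Set.mem_singleton_iff, Set.mem_ofPred_eq, exists_eq_left]
      refine ⟨?_, fun ⟨h1, h2⟩ => Prod.ext (h1.left_unique hc) h2.symm⟩
      rintro rfl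
      exact ⟨hc, rfl⟩
  exact phase4 _ p.1 hp.1 rfl

end Moves

/-! ### Matrix entries of the generators -/

section Entries

open WithZero

variable {L : Type} [Field L] {n : ℕ} {ε : Fin n → Bool}

lemma mkEnd_single {α : Type} (v : α → (α →₀ L)) (p : α) :
    mkEnd L v (Finsupp.single p 1) = v p := by
  simp [mkEnd]

lemma tens_apply (u v : W L ε) (p : Idx ε × Idx ε) : tens L u v p = u p.1 * v p.2 := by
  classical
  obtain ⟨a, b⟩ := p
  simp only [tens, Finsupp.sum, Finsupp.finsetSum_apply, Finsupp.single_apply, Prod.mk.injEq]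
  rw [Finset.sum_eq_single a, Finset.sum_eq_single b]
  · simp
  · intro b' _ h; simp [h]
  · intro h; simp [Finsupp.notMem_support_iff.1 h]
  · intro a' _ h; simp [h]
  · intro h; simp [Finsupp.notMem_support_iff.1 h]

lemma opT_single_apply (A B : W L ε →ₗ[L] W L ε) (p p' : Idx ε × Idx ε) :
    opT L A B (Finsupp.single p 1) p' =
      A (Finsupp.single p.1 1) p'.1 * B (Finsupp.single p.2 1) p'.2 := by
  rw [opT, mkEnd_single, tens_apply]

open Classical in
lemma ket_apply (c : Fin n → ℤ) (b : Idx ε) :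
    ket L ε c b = if ∀ t, (b.1 t : ℤ) = c t then 1 else 0 := by
  unfold ket
  by_cases h : ∀ t, (b.1 t : ℤ) = c t
  · have hc : (fun t => (c t).toNat) = b.1 := funext fun t => by rw [← h t]; simp
    have hok : (∀ t, 0 ≤ c t) ∧ Ok ε (fun t => (c t).toNat) :=
      ⟨fun t => by rw [← h t]; positivity, by rw [hc]; exact b.2⟩
    rw [dif_pos hok, if_pos h]
    have : (⟨fun t => (c t).toNat, hok.2⟩ : Idx ε) = b := Subtype.ext hc
    rw [this, Finsupp.single_eq_same]
  · rw [if_neg h]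
    split_ifs with hok
    · refine Finsupp.single_eq_of_ne fun hb => h fun t => ?_
      rw [hb]
      exact Int.toNat_of_nonneg (hok.1 t)
    · rfl

lemma av_val (b : Fin n → ℕ) (r : Fin n) : av b (r : ℕ) = b r := by
  simp [av, r.2]

lemma qnum_ne_zero {q : ℂ} (hq0 : q ≠ 0) (hq : ∀ k : ℕ, k ≠ 0 → q ^ k ≠ 1) {k : ℕ} (hk : k ≠ 0) :
    qnum q k ≠ 0 := by
  have key : ∀ j : ℕ, j ≠ 0 → q ^ j - q⁻¹ ^ j ≠ 0 := by
    intro j hj h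
    refine hq (j + j) (by omega) ?_
    rw [pow_add]
    nth_rw 1 [sub_eq_zero.1 h]
    rw [inv_pow, inv_mul_cancel₀ (pow_ne_zero _ hq0)]
  refine div_ne_zero (key k hk) ?_
  simpa using key 1 one_ne_zero

lemma qc_ne_zero {q : ℂ} (hq0 : q ≠ 0) (p : ℕ) : qc q ε p ≠ 0 := by
  unfold qc
  split_ifs
  · exact neg_ne_zero.2 (inv_ne_zero hq0)
  · exact hq0
  · exact hq0

variable {w : Valuation L (WithZero (Multiplicative ℤ))} {ι : ℂ →+* L}

lemma val_kA {q : ℂ} (hq0 : q ≠ 0) (hι : ∀ c : ℂ, c ≠ 0 → w (ι c) = 1) (s : ℤ) (r : Fin n)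
    (b b' : Idx ε) :
    w (kA q ι ε s r (Finsupp.single b 1) b') ≤ 1 ∧
      (b ≠ b' → kA q ι ε s r (Finsupp.single b 1) b' = 0) := by
  classical
  rw [kA, mkEnd_single, Finsupp.smul_apply, Finsupp.single_apply]
  split_ifs with h
  · refine ⟨?_, fun h' => absurd h h'⟩
    rw [smul_eq_mul, mul_one, hι]
    exact zpow_ne_zero _ (mul_ne_zero (zpow_ne_zero _ (qc_ne_zero hq0 _))
      (zpow_ne_zero _ (qc_ne_zero hq0 _)))
  · simp

/-- The weight `p ↦ exp (∑ t, t * b_t)` of a pair `p = (a, b)`, with 0-based `t`. It spreads the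
parameter `y` of `e_0` evenly over all the `e_r`: a move `r - 1 → r` multiplies the weight by
`exp 1` if `r ≠ 0` and by `exp (1 - n)` if `r = 0`. -/
def gw (p : Idx ε × Idx ε) : WithZero (Multiplicative ℤ) :=
  exp ((pot (fun t : Fin n => (t : ℕ)) p.2 : ℕ) : ℤ)

lemma gw_pos (p : Idx ε × Idx ε) : 0 < gw p := exp_pos

/-- Labels of the basis vectors of `𝒲_l ⊗ 𝒲_m`. -/
def Lab (ε : Fin n → Bool) (l m : ℕ) : Set (Idx ε × Idx ε) :=
  {p | ∑ t, p.1.1 t = l ∧ ∑ t, p.2.1 t = m}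

lemma finite_lab (l m : ℕ) : (Lab ε l m).Finite := by
  have key : ∀ N : ℕ, {b : Idx ε | ∑ t, b.1 t = N}.Finite := by
    intro N
    refine Set.Finite.of_finite_image (f := Subtype.val)
      ((Set.finite_Iic (fun _ : Fin n => N)).subset ?_) Subtype.val_injective.injOn
    rintro _ ⟨b, hb, rfl⟩ t
    rw [← show ∑ t, b.1 t = N from hb]
    exact Finset.single_le_sum (f := b.1) (fun _ _ => Nat.zero_le _) (Finset.mem_univ t)
  exact ((key l).prod (key m)).subset fun p hp => ⟨hp.1, hp.2⟩

lemma mem_lab_of_mem_WWlm {l m : ℕ} {u : WW L ε} (hu : u ∈ WWlm L ε l m) {p : Idx ε × Idx ε}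
    (hp : u p ≠ 0) : p ∈ Lab ε l m := by
  have hle : WWlm L ε l m ≤ Finsupp.supported L L (Lab ε l m) := by
    refine Submodule.span_le.2 ?_
    rintro _ ⟨p, h1, h2, rfl⟩
    exact Finsupp.single_mem_supported _ _ ⟨h1, h2⟩
  exact (Finsupp.mem_supported _ _).1 (hle hu) (Finsupp.mem_support_iff.2 hp)

variable [NeZero n]

lemma eA_entry (q : ℂ) (ι : ℂ →+* L) (x : L) (r : Fin n) (b b' : Idx ε) :
    eA q ι ε x r (Finsupp.single b 1) b' =
      if Mv r b b' then x ^ (if (r : ℕ) = 0 then 1 else 0) * ι (qnum q (b.1 (cpred r))) else 0 := by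
  have hav : av b.1 (((r : ℕ) + n - 1) % n) = b.1 (cpred r) := av_val b.1 (cpred r)
  rw [eA, mkEnd_single, Finsupp.smul_apply, ket_apply, hav]
  have hiff : (∀ t, (b'.1 t : ℤ) = (b.1 t : ℤ) - dlt (((r : ℕ) + n - 1) % n) t + dlt (r : ℕ) t) ↔
      Mv r b b' := Iff.rfl
  by_cases h : Mv r b b'
  · rw [if_pos h, if_pos (hiff.2 h), smul_eq_mul, mul_one]
  · rw [if_neg h, if_neg fun h' => h (hiff.1 h'), smul_zero]

lemma fA_entry (q : ℂ) (ι : ℂ →+* L) (x : L) (r : Fin n) (b b' : Idx ε) :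
    fA q ι ε x r (Finsupp.single b 1) b' =
      if Mv r b' b then x ^ (if (r : ℕ) = 0 then (-1 : ℤ) else 0) * ι (qnum q (b.1 r)) else 0 := by
  have hiff : (∀ t, (b'.1 t : ℤ) = (b.1 t : ℤ) + dlt (((r : ℕ) + n - 1) % n) t - dlt (r : ℕ) t) ↔
      Mv r b' b :=
    forall_congr' fun t => ⟨fun h => by simp only [cpred]; linarith,
      fun h => by simp only [cpred] at h; linarith⟩
  rw [fA, mkEnd_single, Finsupp.smul_apply, ket_apply, av_val]
  by_cases h : Mv r b' b
  · rw [if_pos h, if_pos (hiff.2 h), smul_eq_mul, mul_one]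
  · rw [if_neg h, if_neg fun h' => h (hiff.1 h'), smul_zero]

lemma gw_of_mv {r : Fin n} {p p' : Idx ε × Idx ε} (h : Mv r p.2 p'.2) :
    exp (if (r : ℕ) = 0 then (n : ℤ) else 0) * gw p' = exp 1 * gw p := by
  have h1 := h.pot_eq (fun t : Fin n => (t : ℕ))
  have := r.2
  simp only [gw]
  rw [← exp_add, ← exp_add, exp_inj]
  split_ifs with h0
  · rw [cpred_val_of_eq h0] at h1
    omega
  · rw [cpred_val_of_ne h0] at h1
    omega

variable {x y : L} {q : ℂ}

/-- The leading part of `Δ(e_r)` is `1 ⊗ e_r`. -/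
lemma Lead.dE_step (hn : 2 ≤ n) (hq0 : q ≠ 0) (hq : ∀ k : ℕ, k ≠ 0 → q ^ k ≠ 1)
    (hι : ∀ c : ℂ, c ≠ 0 → w (ι c) = 1) (hx : w x = 1) (hy : w y = exp (n : ℤ)) (r : Fin n)
    {u : WW L ε} {S : Set (Idx ε × Idx ε)} (h : Lead w gw u S) :
    Lead w gw (dE q ι ε x y r u) {p' | ∃ p ∈ S, p.1 = p'.1 ∧ Mv r p.2 p'.2} := by
  classical
  refine Lead.step gw_pos (c := exp 1) exp_pos (R := fun p p' => p.1 = p'.1 ∧ Mv r p.2 p'.2)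
    ?_ ?_ ?_ ?_ h
  · rintro p p' ⟨h1, h2⟩
    rw [opT_single_apply, LinearMap.id_apply, h1, Finsupp.single_eq_same, one_mul, eA_entry,
      if_pos h2, map_mul, hι _ (qnum_ne_zero hq0 hq (h2.left_pos hn)), mul_one, map_pow, hy,
      ← gw_of_mv h2]
    split_ifs <;> simp
  · intro p p' hne
    rw [opT_single_apply, LinearMap.id_apply, eA_entry, Finsupp.single_apply]
    by_cases h1 : p.1 = p'.1
    · rw [if_neg fun h2 => hne ⟨h1, h2⟩, mul_zero]
    · rw [if_neg h1, zero_mul]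
  · intro p p'
    rw [opT_single_apply]
    obtain ⟨hk1, hk0⟩ := val_kA (ε := ε) hq0 hι 1 r p.2 p'.2
    have hlt : gw p < exp 1 * gw p := by
      simp only [gw, ← exp_add, exp_lt_exp]; omega
    by_cases hp : p.2 = p'.2
    · have hge : gw p' = gw p := by simp only [gw, hp]
      rw [hge]
      refine lt_of_le_of_lt ?_ hlt
      refine mul_le_of_le_one_left zero_le ?_
      rw [map_mul]
      refine mul_le_one' ?_ hk1
      rw [eA_entry]
      split_ifs with h2 h0
      · rw [map_mul, map_pow, hx, one_pow, one_mul, hι _ (qnum_ne_zero hq0 hq (h2.left_pos hn))]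
      · rw [map_mul, map_pow, hx, one_pow, one_mul, hι _ (qnum_ne_zero hq0 hq (h2.left_pos hn))]
      · simp
    · rw [hk0 hp, mul_zero, map_zero, zero_mul]
      exact mul_pos exp_pos (gw_pos p)
  · rintro p₁ p₂ p' ⟨h1, h2⟩ ⟨h3, h4⟩
    exact Prod.ext (h1.trans h3.symm) (h2.left_unique h4)

/-- The leading part of `Δ(f_r)` is `f_r ⊗ 1`. -/
lemma Lead.dF_step (hn : 2 ≤ n) (hq0 : q ≠ 0) (hq : ∀ k : ℕ, k ≠ 0 → q ^ k ≠ 1)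
    (hι : ∀ c : ℂ, c ≠ 0 → w (ι c) = 1) (hx : w x = 1) (hy : w y = exp (n : ℤ)) (r : Fin n)
    {u : WW L ε} {S : Set (Idx ε × Idx ε)} (h : Lead w gw u S) :
    Lead w gw (dF q ι ε x y r u) {p' | ∃ p ∈ S, Mv r p'.1 p.1 ∧ p.2 = p'.2} := by
  classical
  refine Lead.step gw_pos (c := 1) zero_lt_one (R := fun p p' => Mv r p'.1 p.1 ∧ p.2 = p'.2)
    ?_ ?_ ?_ ?_ h
  · rintro p p' ⟨h1, h2⟩
    have hge : gw p' = gw p := by simp only [gw, h2]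
    rw [opT_single_apply, LinearMap.id_apply, h2, Finsupp.single_eq_same, mul_one, fA_entry,
      if_pos h1, map_mul, hι _ (qnum_ne_zero hq0 hq (h1.right_pos hn)), mul_one, map_zpow₀, hx,
      one_zpow, hge]
  · intro p p' hne
    rw [opT_single_apply, LinearMap.id_apply, fA_entry, Finsupp.single_apply]
    by_cases h1 : p.2 = p'.2
    · rw [if_neg fun h2 => hne ⟨h2, h1⟩, zero_mul]
    · rw [if_neg h1, mul_zero]
  · intro p p'
    rw [opT_single_apply, one_mul, fA_entry]
    obtain ⟨hk1, -⟩ := val_kA (ε := ε) hq0 hι (-1) r p.1 p'.1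
    by_cases h2 : Mv r p'.2 p.2
    · rw [if_pos h2, map_mul, map_mul, hι _ (qnum_ne_zero hq0 hq (h2.right_pos hn)), mul_one,
        map_zpow₀, hy, mul_assoc]
      have hgw := gw_of_mv h2
      have : exp (n : ℤ) ^ (if (r : ℕ) = 0 then (-1 : ℤ) else 0) * gw p' = exp (-1) * gw p := by
        simp only [gw, ← exp_add, exp_inj] at hgw
        split_ifs at hgw ⊢
        · simp only [gw, zpow_neg_one, ← exp_neg, ← exp_add, exp_inj]; omega
        · simp only [gw, zpow_zero, one_mul, ← exp_add, exp_inj]; omega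
      rw [this]
      refine lt_of_le_of_lt (mul_le_of_le_one_left zero_le hk1) ?_
      simp only [gw, ← exp_add, exp_lt_exp]; omega
    · rw [if_neg h2, mul_zero, map_zero, zero_mul]
      exact gw_pos p
  · rintro p₁ p₂ p' ⟨h1, h2⟩ ⟨h3, h4⟩
    exact Prod.ext (h1.right_unique h3) (h2.trans h4.symm)

/-- Irreducibility over any field with a valuation for which `x` and the constants are units while
`y` has size `exp n`. -/
lemma irreducible_of_valuation (hn : 2 ≤ n) (hlast : ∀ t : Fin n, (t : ℕ) = n - 1 → ε t = false)
    (hq0 : q ≠ 0) (hq : ∀ k : ℕ, k ≠ 0 → q ^ k ≠ 1)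
    (hι : ∀ c : ℂ, c ≠ 0 → w (ι c) = 1) (hx : w x = 1) (hy : w y = exp (n : ℤ)) (l m : ℕ)
    (U : Submodule L (WW L ε)) (hU : U ≤ WWlm L ε l m)
    (hstab : ∀ r : Fin n, ∀ v ∈ U, dE q ι ε x y r v ∈ U ∧ dF q ι ε x y r v ∈ U) :
    U = ⊥ ∨ U = WWlm L ε l m := by
  classical
  refine or_iff_not_imp_left.2 fun hbot => ?_
  obtain ⟨u₀, hu₀, hne⟩ := Submodule.exists_mem_ne_zero_of_ne_bot hbot
  obtain ⟨S₀, hS₀, hS₀ne⟩ := exists_lead (w := w) gw_pos hne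
  have hsing : ∀ p : Lab ε l m, ∃ u ∈ U, Lead w gw u {p.1} := fun p =>
    singleton_of_stable hn hlast l m (fun S => ∃ u ∈ U, Lead w gw u S)
      (fun S ⟨u, _, h⟩ => h.finite)
      (fun S ⟨u, hu, h⟩ p hp => mem_lab_of_mem_WWlm (hU hu) (h.apply_ne_zero hp))
      (fun S r ⟨u, hu, h⟩ => ⟨_, (hstab r u hu).1, h.dE_step hn hq0 hq hι hx hy r⟩)
      (fun S r ⟨u, hu, h⟩ => ⟨_, (hstab r u hu).2, h.dF_step hn hq0 hq hι hx hy r⟩)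
      ⟨u₀, hu₀, hS₀⟩ hS₀ne p.1 p.2
  choose u hu hlead using hsing
  have : Fintype (Lab ε l m) := (finite_lab l m).fintype
  have hspan : WWlm L ε l m =
      Submodule.span L (Set.range fun p : Lab ε l m => (Finsupp.single p.1 1 : WW L ε)) := by
    unfold WWlm
    congr 1
    ext v
    constructor
    · rintro ⟨p, h1, h2, rfl⟩; exact ⟨⟨p, h1, h2⟩, rfl⟩
    · rintro ⟨p, rfl⟩; exact ⟨p.1, p.2.1, p.2.2, rfl⟩
  have hfd : FiniteDimensional L (WWlm L ε l m) := by
    rw [hspan]; exact FiniteDimensional.span_of_finite L (Set.finite_range _)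
  have hfdU : FiniteDimensional L U := Submodule.finiteDimensional_of_le hU
  have hli := linearIndependent_of_lead gw_pos Subtype.val Subtype.val_injective u hlead
  have hliU : LinearIndependent L fun p => (⟨u p, hu p⟩ : U) :=
    LinearIndependent.of_comp U.subtype hli
  refine Submodule.eq_of_le_of_finrank_le hU ?_
  refine le_trans ?_ hliU.fintype_card_le_finrank
  rw [hspan]
  exact finrank_range_le_card _

end Entries

/-- irreducibility of `𝒲_l⊗𝒲_m` for `0 ≤ κ ≤ n-2`, over `ℂ(q)(x,y)`. -/
theorem statement_15 (q : ℂ) (hq0 : q ≠ 0) (hq : ∀ k : ℕ, k ≠ 0 → q ^ k ≠ 1)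
    (n κ : ℕ) [NeZero n] (hn : 2 ≤ n) (hκ : κ ≤ n - 2)
    (ε : Fin n → Bool) (hε : ε = fun t : Fin n => decide ((t : ℕ) < κ)) (l m : ℕ) :
    ∀ U : Submodule (RatFunc (RatFunc ℂ)) (WW (RatFunc (RatFunc ℂ)) ε),
      U ≤ WWlm (RatFunc (RatFunc ℂ)) ε l m →
      (∀ r : Fin n, ∀ v ∈ U,
        dE q (RatFunc.C.comp RatFunc.C) ε (RatFunc.C RatFunc.X) RatFunc.X r v ∈ U ∧
        dF q (RatFunc.C.comp RatFunc.C) ε (RatFunc.C RatFunc.X) RatFunc.X r v ∈ U ∧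
        dK q (RatFunc.C.comp RatFunc.C) ε 1 r v ∈ U ∧
        dK q (RatFunc.C.comp RatFunc.C) ε (-1) r v ∈ U) →
      U = ⊥ ∨ U = WWlm (RatFunc (RatFunc ℂ)) ε l m := by
  classical
  intro U hU hstab
  -- The `n`-th power of the degree valuation in `y`.
  let w : Valuation (RatFunc (RatFunc ℂ)) (WithZero (Multiplicative ℤ)) :=
    (RatFunc.inftyValuation (RatFunc ℂ)).map (powMonoidWithZeroHom (NeZero.ne n))
      fun a b hab => pow_le_pow_left' hab n
  have hwdef : ∀ z, w z = RatFunc.inftyValuation (RatFunc ℂ) z ^ n := fun _ => rfl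
  have hC : ∀ c : RatFunc ℂ, c ≠ 0 → w (RatFunc.C c) = 1 := fun c hc => by
    rw [hwdef, RatFunc.inftyValuation.C _ hc, one_pow]
  refine irreducible_of_valuation (w := w) hn ?_ hq0 hq ?_ (hC _ RatFunc.X_ne_zero) ?_ l m U hU
    fun r v hv => ⟨(hstab r v hv).1, (hstab r v hv).2.1⟩
  · intro t ht
    rw [hε, decide_eq_false_iff_not]
    omega
  · intro c hc
    exact hC _ ((map_ne_zero RatFunc.C).2 hc)
  · rw [hwdef, RatFunc.inftyValuation.X, ← WithZero.exp_nsmul]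
    simp

end TetraGQ
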